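/- Let Q be a row-stochastic N×N real matrix and Φ ∈ ℝ^{N²×d}. Let S be the set of row-stochastic N×N matrices Q' whose support is contained in that of Q (i.e., Q'_{ij} = 0 whenever Q_{ij} = 0), endowed with the subspace topology from ℝ^{N×N}, and let r* = max_{Q' ∈ S} rank(Δ(Q')Φ). Then the set {Q' ∈ S : rank(Δ(Q')Φ) = r*} is open and dense in S. -/

import Mathlib

/-!
The matrix `M(Q') = Δ(Q')Φ` (`commMul`) depends linearly on `Q'`. Fix a maximiser `Q⋆ ∈ S` and compress:
choose `L`, `R` with `L * M(Q⋆) * R = 1` of size `r⋆` (`exists_compress_eq_one`). The function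
`Q' ↦ det (L * M(Q') * R)` is continuous, and wherever it is nonzero the rank of `M(Q')` is at
least `r⋆`, hence equal to `r⋆` on `S` by maximality.

For openness, a neighbourhood of any maximiser is given by the nonvanishing of the determinant built
from that maximiser. For density, `S` is convex, and along the segment from `x ∈ S` to `Q⋆` the
determinant is a polynomial in the parameter `t` taking the value `1` at `t = 1`; it therefore has
finitely many zeros, so points of the segment arbitrarily close to `x` have rank `r⋆`.
-/

open Matrix
open scoped Kronecker
open Filter Topology

/-- Choosing a basis of the range, a section of the map onto the range and a retraction onto the
range turns `M` into the identity matrix of size `M.rank`. -/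
lemma exists_compress_eq_one {m n : Type*} [Fintype m] [Fintype n] [DecidableEq m] [DecidableEq n]
    (M : Matrix m n ℝ) :
    ∃ (L : Matrix (Fin M.rank) m ℝ) (R : Matrix n (Fin M.rank) ℝ), L * M * R = 1 := by
  obtain ⟨g, hg⟩ := M.mulVecLin.rangeRestrict.exists_rightInverse_of_surjective
    (LinearMap.range_rangeRestrict _)
  obtain ⟨h, hh⟩ := (LinearMap.range M.mulVecLin).subtype.exists_leftInverse_of_injective
    (Submodule.ker_subtype _)
  let e : LinearMap.range M.mulVecLin ≃ₗ[ℝ] (Fin M.rank → ℝ) :=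
    (Module.finBasisOfFinrankEq ℝ (LinearMap.range M.mulVecLin) rfl).equivFun
  refine ⟨LinearMap.toMatrix' (e.toLinearMap ∘ₗ h),
    LinearMap.toMatrix' (g ∘ₗ e.symm.toLinearMap), ?_⟩
  apply Matrix.toLin'.injective
  rw [Matrix.toLin'_mul, Matrix.toLin'_mul, Matrix.toLin'_toMatrix', Matrix.toLin'_toMatrix',
    Matrix.toLin'_one]
  apply LinearMap.ext
  intro v
  have h1 : M *ᵥ g (e.symm v) = (e.symm v : m → ℝ) := by
    have := LinearMap.congr_fun hg (e.symm v)
    exact congrArg Subtype.val this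
  have h2 : h (e.symm v : m → ℝ) = e.symm v := LinearMap.congr_fun hh (e.symm v)
  simp [h1, h2]

lemma le_rank_of_det_compress_ne_zero {m n : Type*} [Fintype m] [Fintype n] {r : ℕ}
    (M : Matrix m n ℝ) (L : Matrix (Fin r) m ℝ) (R : Matrix n (Fin r) ℝ)
    (h : (L * M * R).det ≠ 0) : r ≤ M.rank := by
  have h1 : (L * M * R).rank = r := by
    rw [Matrix.rank_of_isUnit _ ((Matrix.isUnit_iff_isUnit_det _).2 h.isUnit), Fintype.card_fin]
  calc r = (L * M * R).rank := h1.symm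
    _ ≤ (L * M).rank := Matrix.rank_mul_le_left _ _
    _ ≤ M.rank := Matrix.rank_mul_le_right _ _

/-- A determinant that is nonzero at `t = 1` on a line of matrices is nonzero at all small
`t > 0`, because it is a polynomial in `t`. -/
lemma eventually_det_line_ne_zero {r : ℕ} (A B : Matrix (Fin r) (Fin r) ℝ)
    (h : B.det ≠ 0) : ∀ᶠ t : ℝ in 𝓝[>] 0, ((1 - t) • A + t • B).det ≠ 0 := by
  let P : Polynomial ℝ :=
    ((1 - Polynomial.X : Polynomial ℝ) • A.map Polynomial.C +
      (Polynomial.X : Polynomial ℝ) • B.map Polynomial.C).det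
  have hP : ∀ t : ℝ, P.eval t = ((1 - t) • A + t • B).det := by
    intro t
    rw [← Polynomial.coe_evalRingHom, RingHom.map_det]
    congr 1
    ext i j
    simp [mul_comm t]
  have hP0 : P ≠ 0 := by
    intro h0
    have := hP 1
    simp [h0] at this
    exact h this.symm
  -- `0` itself may be a root; removing it leaves a closed set that avoids `0`.
  have hfin : ({t | P.IsRoot t} \ {0} : Set ℝ).Finite :=
    (Polynomial.finite_setOfPred_isRoot hP0).sdiff
  have hev : ∀ᶠ t : ℝ in 𝓝[>] 0, t ∉ ({t | P.IsRoot t} \ {0} : Set ℝ) :=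
    nhdsWithin_le_nhds (hfin.isClosed.isOpen_compl.mem_nhds (by simp))
  filter_upwards [hev, self_mem_nhdsWithin] with t ht ht0 h0
  exact ht ⟨by simpa [Polynomial.IsRoot, hP] using h0, ne_of_gt ht0⟩

/-- The matrix `Δ(Q')Φ`, where `Δ(Q') = I ⊗ Q' − Q'ᵀ ⊗ I` is the commutation operator. -/
def commMul {N d : ℕ} (Φ : Matrix (Fin N × Fin N) (Fin d) ℝ) (Q' : Matrix (Fin N) (Fin N) ℝ) :
    Matrix (Fin N × Fin N) (Fin d) ℝ :=
  ((1 : Matrix (Fin N) (Fin N) ℝ) ⊗ₖ Q' - Q'ᵀ ⊗ₖ (1 : Matrix (Fin N) (Fin N) ℝ)) * Φ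

lemma continuous_commMul {N d : ℕ} (Φ : Matrix (Fin N × Fin N) (Fin d) ℝ) :
    Continuous (commMul Φ) := by
  unfold commMul
  refine Continuous.matrix_mul (Continuous.sub ?_ ?_) continuous_const
  · refine continuous_matrix fun i j => ?_
    simp only [kroneckerMap_apply]
    exact continuous_const.mul (continuous_id.matrix_elem _ _)
  · refine continuous_matrix fun i j => ?_
    simp only [kroneckerMap_apply, transpose_apply]
    exact (continuous_id.matrix_elem _ _).mul continuous_const

lemma commMul_line {N d : ℕ} (Φ : Matrix (Fin N × Fin N) (Fin d) ℝ)
    (x y : Matrix (Fin N) (Fin N) ℝ) (s t : ℝ) :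
    commMul Φ (s • x + t • y) = s • commMul Φ x + t • commMul Φ y := by
  simp only [commMul, ← Matrix.smul_mul, ← Matrix.add_mul]
  congr 1
  ext i j
  simp [kroneckerMap_apply]
  ring

/-- Let `Q` be row-stochastic and `Φ ∈ ℝ^{N²×d}`. On the set `S` of
row-stochastic matrices `Q'` with support contained in that of `Q` (with the
subspace topology), the set of `Q'` where `rank(Δ(Q')Φ)` attains its maximal
value `r*` (with `Δ(Q') = I ⊗ Q' − Q'ᵀ ⊗ I`) is open and dense in `S`. -/
theorem stmt_17 (N d : ℕ) (hN : 1 ≤ N) (Q : Matrix (Fin N) (Fin N) ℝ)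
    (hQ0 : ∀ i j, 0 ≤ Q i j) (hQ1 : ∀ i, ∑ j, Q i j = 1)
    (Φ : Matrix (Fin N × Fin N) (Fin d) ℝ)
    (S : Set (Matrix (Fin N) (Fin N) ℝ))
    (hS : S = {Q' | (∀ i j, 0 ≤ Q' i j) ∧ (∀ i, ∑ j, Q' i j = 1) ∧
      ∀ i j, Q i j = 0 → Q' i j = 0})
    (rstar : ℕ)
    (hr : IsGreatest
      ((fun Q' : Matrix (Fin N) (Fin N) ℝ =>
        (((1 : Matrix (Fin N) (Fin N) ℝ) ⊗ₖ Q' - Q'ᵀ ⊗ₖ (1 : Matrix (Fin N) (Fin N) ℝ)) * Φ).rank)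
        '' S) rstar) :
    IsOpen {x : S |
      (((1 : Matrix (Fin N) (Fin N) ℝ) ⊗ₖ (x : Matrix (Fin N) (Fin N) ℝ) -
        (x : Matrix (Fin N) (Fin N) ℝ)ᵀ ⊗ₖ (1 : Matrix (Fin N) (Fin N) ℝ)) * Φ).rank = rstar} ∧
    Dense {x : S |
      (((1 : Matrix (Fin N) (Fin N) ℝ) ⊗ₖ (x : Matrix (Fin N) (Fin N) ℝ) -
        (x : Matrix (Fin N) (Fin N) ℝ)ᵀ ⊗ₖ (1 : Matrix (Fin N) (Fin N) ℝ)) * Φ).rank = rstar} := by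
  classical
  obtain ⟨⟨y, hyS, hy⟩, hmax⟩ := hr
  change (commMul Φ y).rank = rstar at hy
  have hle : ∀ x ∈ S, (commMul Φ x).rank ≤ rstar := fun x hx => hmax ⟨x, hx, rfl⟩
  change IsOpen {x : S | (commMul Φ x).rank = rstar} ∧
    Dense {x : S | (commMul Φ x).rank = rstar}
  constructor
  · rw [isOpen_iff_mem_nhds]
    rintro x hx
    obtain ⟨L, R, hLR⟩ := exists_compress_eq_one (commMul Φ x)
    have hc : Continuous fun z : S => (L * commMul Φ z * R).det :=
      ((continuous_const.matrix_mul
        ((continuous_commMul Φ).comp continuous_subtype_val)).matrix_mul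
          continuous_const).matrix_det
    have hne : (L * commMul Φ x * R).det ≠ 0 := by simp [hLR]
    filter_upwards [hc.continuousAt.eventually_ne hne] with z hz
    have h1 := le_rank_of_det_compress_ne_zero _ L R hz
    exact le_antisymm (hle z z.2) (hx ▸ h1)
  · intro x
    obtain ⟨L, R, hLR⟩ := exists_compress_eq_one (commMul Φ y)
    have hev := eventually_det_line_ne_zero (L * commMul Φ x * R) (L * commMul Φ y * R)
      (by simp [hLR])
    have hlim : Tendsto (fun t : ℝ => (1 - t) • (x : Matrix (Fin N) (Fin N) ℝ) + t • y)
        (𝓝[>] 0) (𝓝 (x : Matrix (Fin N) (Fin N) ℝ)) := by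
      have hc : Continuous (fun t : ℝ => (1 - t) • (x : Matrix (Fin N) (Fin N) ℝ) + t • y) := by
        fun_prop
      simpa using (hc.tendsto 0).mono_left nhdsWithin_le_nhds
    rw [closure_subtype]
    refine mem_closure_of_tendsto hlim ?_
    filter_upwards [hev, Ioo_mem_nhdsGT (zero_lt_one (α := ℝ))] with t ht ht01
    have hmem : (1 - t) • (x : Matrix (Fin N) (Fin N) ℝ) + t • y ∈ S := by
      have hx := x.2
      simp only [hS, Set.mem_ofPred_eq] at hx hyS ⊢
      refine ⟨fun i j => ?_, fun i => ?_, fun i j hij => ?_⟩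
      · have h1 : 0 ≤ 1 - t := by linarith [ht01.2]
        exact add_nonneg (mul_nonneg h1 (hx.1 i j)) (mul_nonneg ht01.1.le (hyS.1 i j))
      · simp [Finset.sum_add_distrib, ← Finset.mul_sum, hx.2.1 i, hyS.2.1 i]
      · simp [hx.2.2 i j hij, hyS.2.2 i j hij]
    refine ⟨⟨_, hmem⟩, le_antisymm (hle _ hmem) ?_, rfl⟩
    rw [← hy]
    apply le_rank_of_det_compress_ne_zero _ L R
    rw [commMul_line]
    simpa [Matrix.mul_add, Matrix.add_mul] using ht
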